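/- Let ℓ be a prime, k an algebraic closure of the field with ℓ elements, G a normal subgroup of a finite group Ĝ, b a block of kG, and B a block of kĜ such that B·b ≠ 0 (i.e. B covers b) and σ(B) = B. Then b and σ(b) are Ĝ-conjugate, i.e. there exists ĝ ∈ Ĝ with ĝ b ĝ⁻¹ = σ(b), and consequently kGb is isomorphic as a k-algebra to its first Frobenius twist; in particular mf(kGb) = 1. -/

import Mathlib

/-- A central idempotent of a ring. -/
def IsCentralIdem {R : Type*} [Ring R] (b : R) : Prop :=
  (∀ x, b * x = x * b) ∧ b * b = b

/-- A block of a ring: a primitive idempotent of the center, i.e. a nonzero central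
idempotent that is not a sum of two nonzero orthogonal central idempotents. -/
def IsBlock {R : Type*} [Ring R] (b : R) : Prop :=
  IsCentralIdem b ∧ b ≠ 0 ∧
    ∀ c d : R, IsCentralIdem c → IsCentralIdem d → c * d = 0 → b = c + d →
      c = 0 ∨ d = 0

/-- Galois conjugation `σ : kG → kG`, raising each coefficient to the `ℓ`-th power. -/
noncomputable def galois (ℓ : ℕ) (k : Type*) [Field k] [Fact ℓ.Prime] [CharP k ℓ]
    {G : Type*} [Group G] (x : MonoidAlgebra k G) : MonoidAlgebra k G :=
  MonoidAlgebra.ofCoeff (Finsupp.mapRange (frobenius k ℓ) (map_zero _) x.coeff)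

/-- The corner ideal `kG·b` of a central idempotent `b`, as a set. -/
def cornerSet {R : Type*} [Ring R] (b : R) : Set R := {x | x * b = x}

/-!
Distinct blocks are orthogonal, so the sum `e` of the conjugates of `b` is an idempotent; being
invariant under conjugation, it is central in `kGhat`. The block `B` is therefore killed or fixed
by `e`, and since it covers `b` it is fixed. If `B` also covers `b'`, then `B e b' = B b' ≠ 0`, so
`b'` is not orthogonal to some conjugate of `b`, i.e. is equal to it. A `σ`-stable `B` covering `b`
covers `σ(b)` as well, so `g b g⁻¹ = σ(b)` for some `g`, and `x ↦ g⁻¹ σ(x) g` is a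
Frobenius-semilinear ring automorphism of `kG` fixing `b`.
-/

open MonoidAlgebra

section Blocks

variable {R S : Type*} [Ring R] [Ring S] {b c : R}

theorem IsCentralIdem.mul (hb : IsCentralIdem b) (hc : IsCentralIdem c) :
    IsCentralIdem (b * c) :=
  ⟨fun x ↦ Commute.mul_left (hb.1 x) (hc.1 x), IsIdempotentElem.mul_of_commute (hb.1 c) hb.2 hc.2⟩

theorem IsCentralIdem.one_sub (hb : IsCentralIdem b) : IsCentralIdem (1 - b) :=
  ⟨fun x ↦ (Commute.one_left x).sub_left (hb.1 x), IsIdempotentElem.one_sub hb.2⟩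

theorem IsCentralIdem.map (f : R ≃+* S) (hb : IsCentralIdem b) : IsCentralIdem (f b) :=
  ⟨f.surjective.forall.2 fun x ↦ by rw [← map_mul, ← map_mul, hb.1], IsIdempotentElem.map hb.2 f⟩

theorem IsBlock.map (f : R ≃+* S) (hb : IsBlock b) : IsBlock (f b) := by
  refine ⟨hb.1.map f, f.map_ne_zero_iff.2 hb.2.1, fun c d hc hd hcd hsum ↦ ?_⟩
  have hsplit := hb.2.2 (f.symm c) (f.symm d) (hc.map f.symm) (hd.map f.symm)
    (by rw [← map_mul, hcd, map_zero]) (by rw [← map_add, ← hsum, f.symm_apply_apply])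
  simpa only [EmbeddingLike.map_eq_zero_iff] using hsplit

theorem IsBlock.mul_eq_zero_or_mul_eq_self (hb : IsBlock b) (hc : IsCentralIdem c) :
    b * c = 0 ∨ b * c = b := by
  have horth : b * c * (b * (1 - c)) = 0 := by
    rw [hb.1.1 (1 - c), mul_assoc, ← mul_assoc c, IsIdempotentElem.mul_one_sub_self hc.2,
      zero_mul, mul_zero]
  have hsum : b = b * c + b * (1 - c) := by rw [← mul_add, add_sub_cancel, mul_one]
  refine (hb.2.2 _ _ (hb.1.mul hc) (hb.1.mul hc.one_sub) horth hsum).imp_right fun h ↦ ?_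
  rwa [h, add_zero, eq_comm] at hsum

theorem IsBlock.eq_of_mul_ne_zero (hb : IsBlock b) (hc : IsBlock c) (h : b * c ≠ 0) : b = c :=
  calc
    b = b * c := ((hb.mul_eq_zero_or_mul_eq_self hc.1).resolve_left h).symm
    _ = c * b := hb.1.1 c
    _ = c := (hc.mul_eq_zero_or_mul_eq_self hb.1).resolve_left (hb.1.1 c ▸ h)

variable {T : Finset R}

theorem orthogonalIdempotents_of_isBlock (hT : ∀ c ∈ T, IsBlock c) :
    OrthogonalIdempotents ((↑) : T → R) where
  idem c := (hT c c.2).1.2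
  ortho c d hcd := by
    by_contra h
    exact hcd (Subtype.ext ((hT c c.2).eq_of_mul_ne_zero (hT d d.2) h))

theorem isIdempotentElem_sum_of_isBlock (hT : ∀ c ∈ T, IsBlock c) :
    IsIdempotentElem (∑ c ∈ T, c) := by
  rw [← Finset.sum_coe_sort]
  exact (orthogonalIdempotents_of_isBlock hT).isIdempotentElem_sum

theorem mul_sum_of_isBlock (hT : ∀ c ∈ T, IsBlock c) (hb : b ∈ T) : b * ∑ c ∈ T, c = b := by
  rw [← Finset.sum_coe_sort]
  exact (orthogonalIdempotents_of_isBlock hT).mul_sum_of_mem (i := ⟨b, hb⟩) (Finset.mem_univ _)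

theorem IsBlock.mem_of_sum_mul_ne_zero (hb : IsBlock b) (hT : ∀ c ∈ T, IsBlock c)
    (h : (∑ c ∈ T, c) * b ≠ 0) : b ∈ T := by
  rw [Finset.sum_mul] at h
  obtain ⟨c, hc, hcb⟩ := Finset.exists_ne_zero_of_sum_ne_zero h
  exact (hT c hc).eq_of_mul_ne_zero hb hcb ▸ hc

theorem bijOn_cornerSet (f : R ≃+* S) (b : R) : Set.BijOn f (cornerSet b) (cornerSet (f b)) :=
  f.toEquiv.bijOn fun x ↦ by
    change f x * f b = f x ↔ x * b = x
    rw [← map_mul, f.injective.eq_iff]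

end Blocks

section Conjugation

variable (k : Type*) [CommRing k] {Ghat : Type*} [Group Ghat] (G : Subgroup Ghat) [G.Normal]

/-- The conjugation action of `Ghat` on the group algebra of a normal subgroup `G`. It is stated
on `kG` itself, rather than inside `kGhat`, so that it permutes the blocks of `kG`. -/
noncomputable def conjAut : Ghat →* (MonoidAlgebra k G ≃ₐ[k] MonoidAlgebra k G) :=
  (domCongrAut (R := k) (A := k)).comp MulAut.conjNormal

variable {k G}

theorem mapDomainRingHom_conjAut (g : Ghat) (x : MonoidAlgebra k G) :
    mapDomainRingHom k G.subtype (conjAut k G g x) =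
      single g 1 * mapDomainRingHom k G.subtype x * single g⁻¹ 1 := by
  induction x using MonoidAlgebra.induction_linear with
  | zero => simp only [map_zero, mul_zero, zero_mul]
  | add x y hx hy => simp only [map_add, hx, hy, mul_add, add_mul]
  | single h c => simp [conjAut, single_mul_single]

theorem commute_mapDomainRingHom_of_conjAut_eq {e : MonoidAlgebra k G}
    (he : ∀ g, conjAut k G g e = e) (x : MonoidAlgebra k Ghat) :
    Commute (mapDomainRingHom k G.subtype e) x := by
  induction x using MonoidAlgebra.induction_on with
  | of g =>
    have hconj := mapDomainRingHom_conjAut g e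
    rw [he] at hconj
    calc
      mapDomainRingHom k G.subtype e * single g 1
      _ = single g 1 * mapDomainRingHom k G.subtype e * single g⁻¹ 1 * single g 1 := by rw [← hconj]
      _ = single g 1 * mapDomainRingHom k G.subtype e := by
        rw [mul_assoc, single_mul_single, inv_mul_cancel, mul_one, ← one_def, mul_one]
  | add x y hx hy => exact hx.add_right hy
  | smul r x hx => exact hx.smul_right r

variable {b b' : MonoidAlgebra k G}

theorem conjAut_sum_conj (hfin : (Set.range fun g ↦ conjAut k G g b).Finite) (g : Ghat) :
    conjAut k G g (∑ c ∈ hfin.toFinset, c) = ∑ c ∈ hfin.toFinset, c := by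
  have hmul (g h : Ghat) : conjAut k G g (conjAut k G h b) = conjAut k G (g * h) b := by
    rw [map_mul, AlgEquiv.mul_apply]
  rw [map_sum]
  refine Finset.sum_nbij (conjAut k G g) ?_ (conjAut k G g).injective.injOn ?_ fun _ _ ↦ rfl
  · intro c hc
    obtain ⟨h, rfl⟩ := hfin.mem_toFinset.1 hc
    exact hfin.mem_toFinset.2 ⟨g * h, (hmul g h).symm⟩
  · rw [hfin.coe_toFinset]
    rintro _ ⟨h, rfl⟩
    exact ⟨_, ⟨g⁻¹ * h, rfl⟩, by rw [hmul, mul_inv_cancel_left]⟩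

theorem exists_conjAut_eq_of_covers (hb : IsBlock b) (hb' : IsBlock b')
    (hfin : (Set.range fun g ↦ conjAut k G g b).Finite) {B : MonoidAlgebra k Ghat} (hB : IsBlock B)
    (hBb : B * mapDomainRingHom k G.subtype b ≠ 0)
    (hBb' : B * mapDomainRingHom k G.subtype b' ≠ 0) : ∃ g, conjAut k G g b = b' := by
  let e := ∑ c ∈ hfin.toFinset, c
  have hblocks : ∀ c ∈ hfin.toFinset, IsBlock c := by
    simpa using fun g ↦ hb.map (conjAut k G g).toRingEquiv
  have hbe : b * e = b := mul_sum_of_isBlock hblocks (hfin.mem_toFinset.2 ⟨1, by simp⟩)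
  have hcentral : IsCentralIdem (mapDomainRingHom k G.subtype e) :=
    ⟨commute_mapDomainRingHom_of_conjAut_eq (conjAut_sum_conj hfin),
      (isIdempotentElem_sum_of_isBlock hblocks).map _⟩
  have hBe : B * mapDomainRingHom k G.subtype e = B := by
    refine (hB.mul_eq_zero_or_mul_eq_self hcentral).resolve_left fun h ↦ hBb ?_
    rw [← hbe, map_mul, ← hcentral.1, ← mul_assoc, h, zero_mul]
  have heb' : e * b' ≠ 0 := fun h ↦ hBb' <| by
    rw [← hBe, mul_assoc, ← map_mul, h, map_zero, mul_zero]
  exact hfin.mem_toFinset.1 (hb'.mem_of_sum_mul_ne_zero hblocks heb')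

end Conjugation

section Galois

variable (ℓ : ℕ) [Fact ℓ.Prime] (k : Type*) [Field k] [CharP k ℓ]

/-- Galois conjugation as a ring automorphism of the group algebra over a perfect field. -/
noncomputable def galoisEquiv [PerfectRing k ℓ] (G : Type*) [Group G] :
    MonoidAlgebra k G ≃+* MonoidAlgebra k G :=
  mapRingEquiv G (frobeniusEquiv k ℓ)

theorem coe_galoisEquiv [PerfectRing k ℓ] (G : Type*) [Group G] :
    ⇑(galoisEquiv ℓ k G) = galois ℓ k := by
  ext x g
  simp [galoisEquiv, galois]

variable {ℓ k}

theorem galoisEquiv_smul [PerfectRing k ℓ] {G : Type*} [Group G] (c : k) (x : MonoidAlgebra k G) :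
    galoisEquiv ℓ k G (c • x) = c ^ ℓ • galoisEquiv ℓ k G x := by
  ext g
  simp [galoisEquiv, frobenius_def, mul_pow]

theorem mapDomainRingHom_galois {G H : Type*} [Group G] [Group H] (f : G →* H)
    (x : MonoidAlgebra k G) :
    mapDomainRingHom k f (galois ℓ k x) = galois ℓ k (mapDomainRingHom k f x) :=
  (congr($(mapRingHom_comp_mapDomainRingHom (frobenius k ℓ) f) x)).symm

variable [PerfectRing k ℓ] {Ghat : Type*} [Group Ghat] {G : Subgroup Ghat}
  {b : MonoidAlgebra k G}

theorem covers_galois_of_galois_eq {B : MonoidAlgebra k Ghat} (hBfix : galois ℓ k B = B)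
    (hcover : B * mapDomainRingHom k G.subtype b ≠ 0) :
    B * mapDomainRingHom k G.subtype (galois ℓ k b) ≠ 0 := by
  rw [mapDomainRingHom_galois, ← hBfix, ← coe_galoisEquiv, ← map_mul]
  exact (galoisEquiv ℓ k Ghat).map_ne_zero_iff.2 hcover

variable [G.Normal]

theorem exists_ringEquiv_pow_smul_of_conjAut_eq_galois {g : Ghat}
    (hg : conjAut k G g b = galois ℓ k b) :
    ∃ φ : MonoidAlgebra k G ≃+* MonoidAlgebra k G,
      φ b = b ∧ ∀ (c : k) (x : MonoidAlgebra k G), φ (c • x) = c ^ ℓ • φ x := by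
  refine ⟨(galoisEquiv ℓ k G).trans (conjAut k G g).symm.toRingEquiv, ?_, fun c x ↦ ?_⟩
  · change (conjAut k G g).symm (galoisEquiv ℓ k G b) = b
    rw [coe_galoisEquiv, ← hg, AlgEquiv.symm_apply_apply]
  · change (conjAut k G g).symm (galoisEquiv ℓ k G (c • x)) = _
    rw [galoisEquiv_smul, map_smul]
    rfl

end Galois

theorem covered_block_galois_stable_cover_conjugate_and_iso_twist_general
    {ℓ : ℕ} [Fact ℓ.Prime] {k : Type*} [Field k] [CharP k ℓ] [PerfectRing k ℓ]
    {Ghat : Type*} [Group Ghat] {G : Subgroup Ghat} [G.Normal]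
    {b : MonoidAlgebra k G} (hb : IsBlock b)
    (hfin : (Set.range fun g ↦ conjAut k G g b).Finite)
    {B : MonoidAlgebra k Ghat} (hB : IsBlock B)
    (hcover : B * mapDomainRingHom k G.subtype b ≠ 0) (hBfix : galois ℓ k B = B) :
    (∃ ghat : Ghat, single ghat (1 : k) * mapDomainRingHom k G.subtype b * single ghat⁻¹ (1 : k) =
      mapDomainRingHom k G.subtype (galois ℓ k b)) ∧
    ∃ ψ : MonoidAlgebra k G → MonoidAlgebra k G,
      Set.BijOn ψ (cornerSet b) (cornerSet b) ∧
      (∀ x ∈ cornerSet b, ∀ y ∈ cornerSet b, ψ (x + y) = ψ x + ψ y) ∧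
      (∀ x ∈ cornerSet b, ∀ y ∈ cornerSet b, ψ (x * y) = ψ x * ψ y) ∧
      (∀ (c : k), ∀ x ∈ cornerSet b, ψ (c • x) = c ^ ℓ • ψ x) := by
  have hσb : IsBlock (galois ℓ k b) := coe_galoisEquiv ℓ k G ▸ hb.map (galoisEquiv ℓ k G)
  obtain ⟨g, hg⟩ := exists_conjAut_eq_of_covers hb hσb hfin hB hcover
    (covers_galois_of_galois_eq hBfix hcover)
  obtain ⟨φ, hφb, hφ⟩ := exists_ringEquiv_pow_smul_of_conjAut_eq_galois hg
  have hbij : Set.BijOn φ (cornerSet b) (cornerSet b) := by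
    simpa only [hφb] using bijOn_cornerSet φ b
  exact ⟨⟨g, by rw [← mapDomainRingHom_conjAut, hg]⟩, φ, hbij, fun x _ y _ ↦ map_add φ x y,
    fun x _ y _ ↦ map_mul φ x y, fun c x _ ↦ hφ c x⟩

/-- Let `G ⊴ Ghat`, let `b` be a block of `kG` and `B` a block of `kGhat` covering `b`
(i.e. `B·b ≠ 0` inside `kGhat`) with `σ(B) = B`.  Then `b` and `σ(b)` are `Ghat`-conjugate:
there is `ghat ∈ Ghat` with `ghat b ghat⁻¹ = σ(b)`; and consequently `kG·b` is isomorphic as a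
`k`-algebra to its first Frobenius twist, so in particular `mf(kGb) = 1`. -/
theorem covered_block_galois_stable_cover_conjugate_and_iso_twist
    (ℓ : ℕ) [Fact ℓ.Prime] (k : Type) [Field k] [IsAlgClosed k] [CharP k ℓ]
    [Algebra (ZMod ℓ) k] [IsAlgClosure (ZMod ℓ) k]
    (Ghat : Type) [Group Ghat] [Fintype Ghat] (G : Subgroup Ghat) [G.Normal]
    (b : MonoidAlgebra k G) (hb : IsBlock b)
    (B : MonoidAlgebra k Ghat) (hB : IsBlock B)
    (hcover : B * (MonoidAlgebra.mapDomainRingHom k G.subtype b) ≠ 0)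
    (hBfix : galois ℓ k B = B) :
    (∃ ghat : Ghat, MonoidAlgebra.single ghat (1 : k) *
        (MonoidAlgebra.mapDomainRingHom k G.subtype b) *
        MonoidAlgebra.single ghat⁻¹ (1 : k) =
        MonoidAlgebra.mapDomainRingHom k G.subtype (galois ℓ k b)) ∧
    ∃ ψ : MonoidAlgebra k G → MonoidAlgebra k G,
      Set.BijOn ψ (cornerSet b) (cornerSet b) ∧
      (∀ x ∈ cornerSet b, ∀ y ∈ cornerSet b, ψ (x + y) = ψ x + ψ y) ∧
      (∀ x ∈ cornerSet b, ∀ y ∈ cornerSet b, ψ (x * y) = ψ x * ψ y) ∧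
      (∀ (c : k), ∀ x ∈ cornerSet b, ψ (c • x) = c ^ ℓ • ψ x) :=
  covered_block_galois_stable_cover_conjugate_and_iso_twist_general hb (Set.toFinite _) hB
    hcover hBfix
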